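/- Suppose a and b are linked by I over M, every associated prime of M/IM is minimal, and let t = grade(I, M). Then for every minimal prime p of Ass(M/aM), the height of p on M equals t and the localization M_p is a Cohen-Macaulay R_p-module. -/

import Mathlib

open RingTheory.Sequence

/-- The colon submodule `N :_M a = {m ∈ M | a m ⊆ N}`. -/
def Submodule.colonBy {R M : Type*} [CommRing R] [AddCommGroup M] [Module R M]
    (N : Submodule R M) (a : Ideal R) : Submodule R M :=
  ⨅ r ∈ a, N.comap (LinearMap.lsmul R M r)
/-- `a` and `b` are linked by `I` over `M`: `I ⊆ a ∩ b` is generated by an `M`-regular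
sequence, `aM ≠ M ≠ bM`, `IM :_M a = bM` and `IM :_M b = aM`. -/
def Ideal.LinkedBy (R M : Type*) [CommRing R] [AddCommGroup M] [Module R M]
    (a b I : Ideal R) : Prop :=
  I ≤ a ⊓ b ∧
  (∃ rs : List R, I = Ideal.ofList rs ∧ RingTheory.Sequence.IsRegular M rs) ∧
  a • (⊤ : Submodule R M) ≠ ⊤ ∧ b • (⊤ : Submodule R M) ≠ ⊤ ∧
  (I • ⊤ : Submodule R M).colonBy a = b • (⊤ : Submodule R M) ∧
  (I • ⊤ : Submodule R M).colonBy b = a • (⊤ : Submodule R M)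
/-- The `M`-grade of an ideal `c`: the length of a maximal `M`-regular sequence
with entries in `c`. -/
noncomputable def Module.grade (R : Type*) [CommRing R] (c : Ideal R)
    (M : Type*) [AddCommGroup M] [Module R M] : ℕ :=
  sSup {n | ∃ rs : List R, rs.length = n ∧ (∀ r ∈ rs, r ∈ c) ∧
    RingTheory.Sequence.IsRegular M rs}
/-- The dimension of a module: the Krull dimension of `R / ann M`. -/
noncomputable def Module.dim (R : Type*) [CommRing R]
    (M : Type*) [AddCommGroup M] [Module R M] : WithBot (WithTop ℕ) :=
  ringKrullDim (R ⧸ Module.annihilator R M)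

/-- A module over a local ring is Cohen–Macaulay if its depth (the grade of the
maximal ideal) equals its dimension. -/
def Module.IsCM (R : Type*) [CommRing R] [IsLocalRing R]
    (M : Type*) [AddCommGroup M] [Module R M] : Prop :=
  (Module.grade R (IsLocalRing.maximalIdeal R) M : WithBot (WithTop ℕ)) = Module.dim R M

/-!
Since `aM = IM :_M b` and `b` is finitely generated, every annihilator ideal of an element of
`M / aM` is a finite intersection of annihilators of elements of `M / IM`, whence
`Ass (M / aM) ⊆ Ass (M / IM)`. So `p` is a minimal prime of `M / IM`, and the localization
`(M / IM)_p = M_p / I M_p` has dimension zero. The generators of `I` form an `M_p`-regular sequence,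
and each of them drops the dimension by one, so `dim M_p` is their number `n`. No regular sequence
on `M_p` is longer than `dim M_p`, and regular sequences of `M` in `I` localize to regular sequences
of `M_p`; hence both `grade (I, M)` and the depth of `M_p` are equal to `n`.
-/

section AssociatedPrimes

variable {R M : Type*} [CommRing R] [AddCommGroup M] [Module R M]

theorem mem_colonBy {N : Submodule R M} {b : Ideal R} {m : M} :
    m ∈ N.colonBy b ↔ b ≤ N.colon {m} := by
  simp [Submodule.colonBy, SetLike.le_def]

theorem colonBy_span_colon_singleton (N : Submodule R M) (s : Set R) (m : M) :
    (N.colonBy (Ideal.span s)).colon {m} = ⨅ c ∈ s, N.colon {c • m} := by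
  ext r
  simp only [Submodule.mem_colon_singleton, mem_colonBy, Ideal.span_le, Set.subset_def,
    SetLike.mem_coe, Submodule.mem_iInf, smul_comm r]

theorem bot_colon_singleton_mk (N : Submodule R M) (m : M) :
    (⊥ : Submodule R (M ⧸ N)).colon {N.mkQ m} = N.colon {m} := by
  ext r
  rw [Submodule.mem_colon_singleton, Submodule.mem_colon_singleton, Submodule.mem_bot, ← map_smul,
    Submodule.mkQ_apply, Submodule.Quotient.mk_eq_zero]

theorem associatedPrimes_quotient (N : Submodule R M) :
    associatedPrimes R (M ⧸ N) = N.associatedPrimes := by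
  ext p
  simp only [AssociatedPrimes.mem_iff, Submodule.AssociatePrimes.mem_iff, IsAssociatedPrime,
    Submodule.isAssociatedPrime_def, N.mkQ_surjective.exists, bot_colon_singleton_mk]

theorem associatedPrimes_colonBy_subset (N : Submodule R M) {b : Ideal R} (hb : b.FG) :
    (N.colonBy b).associatedPrimes ⊆ N.associatedPrimes := by
  obtain ⟨s, rfl⟩ := hb
  rintro p ⟨hp, m, hpm⟩
  rw [colonBy_span_colon_singleton] at hpm
  have hinf : s.inf (fun c ↦ N.colon {c • m}) ≤ p := by
    rw [hpm, Finset.inf_eq_iInf]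
    exact Ideal.le_radical
  obtain ⟨c, hc, hcp⟩ := hp.inf_le'.mp hinf
  exact ⟨hp, c • m, le_antisymm (hpm.le.trans (Ideal.radical_mono (iInf₂_le c hc)))
    (hp.radical_le_iff.mpr hcp)⟩

theorem associatedPrimes_quotient_subset_of_linkedBy {a b I : Ideal R}
    (h : Ideal.LinkedBy R M a b I) (hb : b.FG) :
    associatedPrimes R (M ⧸ (a • ⊤ : Submodule R M)) ⊆
      associatedPrimes R (M ⧸ (I • ⊤ : Submodule R M)) := by
  obtain ⟨-, -, -, -, -, hcolon⟩ := h
  rw [associatedPrimes_quotient, associatedPrimes_quotient, ← hcolon]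
  exact associatedPrimes_colonBy_subset _ hb

theorem mem_minimalPrimes_annihilator_of_minimal [IsNoetherianRing R] [Module.Finite R M]
    {p : Ideal R} (hp : p ∈ associatedPrimes R M)
    (hmin : ∀ q ∈ associatedPrimes R M, q ≤ p → q = p) :
    p ∈ (Module.annihilator R M).minimalPrimes := by
  have := hp.isPrime
  obtain ⟨q, hq, hqp⟩ := Ideal.exists_minimalPrimes_le
    (Submodule.annihilator_top.symm.trans_le (IsAssociatedPrime.annihilator_le hp))
  have hq_ass := Module.associatedPrimes.minimalPrimes_annihilator_subset_associatedPrimes R M hq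
  rwa [← hmin q hq_ass hqp]

end AssociatedPrimes

section Localization

variable {R M : Type*} [CommRing R] [AddCommGroup M] [Module R M] {p : Ideal R} [p.IsPrime]

theorem map_annihilator_le_annihilator_localizedModule (S : Submonoid R) :
    (Module.annihilator R M).map (algebraMap R (Localization S)) ≤
      Module.annihilator (Localization S) (LocalizedModule S M) := by
  refine Ideal.map_le_iff_le_comap.mpr fun r hr ↦ Module.mem_annihilator.mpr fun x ↦ ?_
  induction x using LocalizedModule.induction_on with
  | h m s =>
    rw [algebraMap_smul, LocalizedModule.smul'_mk, Module.mem_annihilator.mp hr m,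
      LocalizedModule.zero_mk]

/-- Localization commutes with the quotient by `IM`: `(M / IM)_S ≃ M_S / (I R_S) M_S`.
It computes the dimension of `M_p / I M_p` as that of a localization of `M / IM`. -/
noncomputable def localizedModuleQuotientSMulTopEquiv (S : Submonoid R) (I : Ideal R) :
    LocalizedModule S (M ⧸ (I • ⊤ : Submodule R M)) ≃ₗ[Localization S]
      LocalizedModule S M ⧸ (I.map (algebraMap R (Localization S)) • ⊤ :
        Submodule (Localization S) (LocalizedModule S M)) :=
  (localizedQuotientEquiv _ _).symm ≪≫ₗ Submodule.quotEquivOfEq _ _ (by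
    rw [Submodule.localized, Submodule.localized'_smul, Ideal.localized'_eq_map,
      Submodule.localized'_top])

variable [Module.Finite R M]

theorem nontrivial_localizedModule_of_annihilator_le (hp : Module.annihilator R M ≤ p) :
    Nontrivial (LocalizedModule p.primeCompl M) :=
  Module.mem_support_iff (p := ⟨p, inferInstance⟩).mp (Module.mem_support_iff_of_finite.mpr hp)

theorem annihilator_quotient_smul_top_le_iff {I : Ideal R} :
    Module.annihilator R (M ⧸ (I • ⊤ : Submodule R M)) ≤ p ↔
      Module.annihilator R M ≤ p ∧ I ≤ p := by
  have := congrArg (⟨p, inferInstance⟩ ∈ ·) (Module.support_quotient (M := M) I)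
  simpa only [Set.mem_inter_iff, Module.mem_support_iff_of_finite, PrimeSpectrum.mem_zeroLocus,
    SetLike.coe_subset_coe, eq_iff_iff] using this

theorem supportDim_localizedModule_eq_zero_of_mem_minimalPrimes
    (hp : p ∈ (Module.annihilator R M).minimalPrimes) :
    Module.supportDim (Localization.AtPrime p) (LocalizedModule p.primeCompl M) = 0 := by
  have := nontrivial_localizedModule_of_annihilator_le hp.1.2
  have support_subset : Module.support (Localization.AtPrime p) (LocalizedModule p.primeCompl M) ⊆
      {IsLocalRing.closedPoint (Localization.AtPrime p)} := by
    intro Q hQ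
    have hrad := IsLocalization.AtPrime.radical_map_of_mem_minimalPrimes
      (A := Localization.AtPrime p) p _ hp
    rw [Localization.AtPrime.map_eq_maximalIdeal] at hrad
    have hmax : IsLocalRing.maximalIdeal (Localization.AtPrime p) ≤ Q.asIdeal :=
      hrad ▸ Q.isPrime.radical_le_iff.mpr
        ((map_annihilator_le_annihilator_localizedModule _).trans
          (Module.mem_support_iff_of_finite.mp hQ))
    exact PrimeSpectrum.ext (le_antisymm (IsLocalRing.le_maximalIdeal Q.isPrime.ne_top) hmax)
  have := (Set.subsingleton_singleton.anti support_subset).coe_sort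
  have := (Module.nonempty_support_of_nontrivial (R := Localization.AtPrime p)
    (M := LocalizedModule p.primeCompl M)).to_subtype
  exact Order.krullDim_eq_zero

theorem isRegular_localizedModule_map {rs : List R} (reg : IsWeaklyRegular M rs)
    (hM : Module.annihilator R M ≤ p) (hrs : Ideal.ofList rs ≤ p) :
    IsRegular (LocalizedModule p.primeCompl M) (rs.map (algebraMap R (Localization.AtPrime p))) :=
  have := nontrivial_localizedModule_of_annihilator_le hM
  reg.isRegular_of_isLocalizedModule_of_mem _ p
    (LocalizedModule.mkLinearMap p.primeCompl M) fun _ hr ↦ hrs (Ideal.subset_span hr)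

end Localization

section RegularSequences

variable {R M : Type*} [CommRing R] [AddCommGroup M] [Module R M]

theorem grade_eq_length {c : Ideal R} {rs : List R} (reg : IsRegular M rs)
    (hrs : ∀ r ∈ rs, r ∈ c)
    (hle : ∀ ss : List R, (∀ r ∈ ss, r ∈ c) → IsRegular M ss → ss.length ≤ rs.length) :
    Module.grade R c M = rs.length := by
  refine IsGreatest.csSup_eq ⟨⟨rs, rfl, hrs, reg⟩, ?_⟩
  rintro _ ⟨ss, rfl, hss, hreg⟩
  exact hle ss hss hreg

theorem mem_maximalIdeal_of_isRegular [IsLocalRing R] {rs : List R} (reg : IsRegular M rs)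
    {r : R} (hr : r ∈ rs) : r ∈ IsLocalRing.maximalIdeal R := by
  refine (IsLocalRing.mem_maximalIdeal r).mpr fun hunit ↦ reg.top_ne_smul ?_
  rw [Ideal.eq_top_of_isUnit_mem (Ideal.ofList rs) (Ideal.subset_span hr) hunit,
    Submodule.top_smul]

variable [Module.Finite R M]

theorem dim_eq_supportDim : Module.dim R M = Module.supportDim R M :=
  (Module.supportDim_eq_ringKrullDim_quotient_annihilator R M).symm

variable [IsNoetherianRing R]

theorem length_le_supportDim_of_isRegular [IsLocalRing R] {rs : List R} (reg : IsRegular M rs) :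
    rs.length ≤ Module.supportDim R M := by
  have := reg.quot_ofList_smul_nontrivial ⊤
  rw [← Module.supportDim_add_length_eq_supportDim_of_isRegular rs reg]
  exact le_add_of_nonneg_left
    (Order.krullDim_nonneg_iff.mpr Module.nonempty_support_of_nontrivial.to_subtype)

theorem isCM_of_supportDim_eq_length [IsLocalRing R] {rs : List R} (reg : IsRegular M rs)
    (hdim : Module.supportDim R M = rs.length) : Module.IsCM R M := by
  have hgrade : Module.grade R (IsLocalRing.maximalIdeal R) M = rs.length :=
    grade_eq_length reg (fun _ ↦ mem_maximalIdeal_of_isRegular reg) fun ss _ hss ↦ by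
      exact_mod_cast hdim ▸ length_le_supportDim_of_isRegular hss
  rw [Module.IsCM, hgrade, dim_eq_supportDim]
  exact hdim.symm

theorem supportDim_localizedModule_eq_length {rs : List R} (reg : IsRegular M rs) {p : Ideal R}
    [p.IsPrime]
    (hp : p ∈ (Module.annihilator R (M ⧸ (Ideal.ofList rs • ⊤ : Submodule R M))).minimalPrimes) :
    Module.supportDim (Localization.AtPrime p) (LocalizedModule p.primeCompl M) = rs.length := by
  obtain ⟨hM, hrs⟩ := annihilator_quotient_smul_top_le_iff.mp hp.1.2
  rw [← Module.supportDim_add_length_eq_supportDim_of_isRegular _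
      (isRegular_localizedModule_map reg.toIsWeaklyRegular hM hrs), ← Ideal.map_ofList,
    ← Module.supportDim_eq_of_equiv (localizedModuleQuotientSMulTopEquiv _ _),
    supportDim_localizedModule_eq_zero_of_mem_minimalPrimes hp, zero_add, List.length_map]

theorem grade_ofList_eq_length {rs : List R} (reg : IsRegular M rs) :
    Module.grade R (Ideal.ofList rs) M = rs.length := by
  refine grade_eq_length reg (fun _ hr ↦ Ideal.subset_span hr) fun ss hss hss_reg ↦ ?_
  have := reg.quot_ofList_smul_nontrivial ⊤
  have hann : Module.annihilator R (M ⧸ (Ideal.ofList rs • ⊤ : Submodule R M)) ≠ ⊤ :=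
    Module.annihilator_eq_top_iff.not.mpr (not_subsingleton _)
  obtain ⟨p, hp⟩ := Ideal.nonempty_minimalPrimes hann
  have := hp.isPrime
  obtain ⟨hM, hrs⟩ := annihilator_quotient_smul_top_le_iff.mp hp.1.2
  have hss_le : Ideal.ofList ss ≤ p := (Ideal.span_le.mpr hss).trans hrs
  have hlength :=
    length_le_supportDim_of_isRegular
      (isRegular_localizedModule_map hss_reg.toIsWeaklyRegular hM hss_le)
  rw [supportDim_localizedModule_eq_length reg hp, List.length_map] at hlength
  exact_mod_cast hlength

end RegularSequences

theorem localization_cm_of_linked_general {R M : Type*} [CommRing R] [IsNoetherianRing R]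
    [AddCommGroup M] [Module R M] [Module.Finite R M] {rs : List R} (reg : IsRegular M rs)
    {p : Ideal R} [p.IsPrime]
    (hp : p ∈ (Module.annihilator R (M ⧸ (Ideal.ofList rs • ⊤ : Submodule R M))).minimalPrimes) :
    Module.dim (Localization.AtPrime p) (LocalizedModule p.primeCompl M) =
        (Module.grade R (Ideal.ofList rs) M : WithBot (WithTop ℕ)) ∧
      Module.IsCM (Localization.AtPrime p) (LocalizedModule p.primeCompl M) := by
  obtain ⟨hM, hrs⟩ := annihilator_quotient_smul_top_le_iff.mp hp.1.2
  have hdim := supportDim_localizedModule_eq_length reg hp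
  have hreg := isRegular_localizedModule_map reg.toIsWeaklyRegular hM hrs
  refine ⟨?_, isCM_of_supportDim_eq_length hreg (by rw [hdim, List.length_map])⟩
  rw [dim_eq_supportDim, grade_ofList_eq_length reg]
  exact hdim

/-- If `a` and `b` are linked by `I` over `M`, every associated prime of `M/IM` is
minimal, and `t = grade(I, M)`, then for every minimal associated prime `p` of `M/aM`,
the height of `p` on `M` (i.e. `dim M_p`) equals `t` and `M_p` is a Cohen–Macaulay
`R_p`-module. -/
theorem localization_cm_of_linked {R M : Type*} [CommRing R] [IsNoetherianRing R]
    [AddCommGroup M] [Module R M] [Module.Finite R M]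
    (a b I : Ideal R) (h : Ideal.LinkedBy R M a b I)
    (hmin : ∀ p ∈ associatedPrimes R (M ⧸ (I • ⊤ : Submodule R M)),
      ∀ q ∈ associatedPrimes R (M ⧸ (I • ⊤ : Submodule R M)), q ≤ p → q = p)
    (t : ℕ) (ht : t = Module.grade R I M)
    (p : Ideal R) [p.IsPrime]
    (hp : p ∈ associatedPrimes R (M ⧸ (a • ⊤ : Submodule R M)))
    (hpmin : ∀ q ∈ associatedPrimes R (M ⧸ (a • ⊤ : Submodule R M)), q ≤ p → q = p) :
    Module.dim (Localization.AtPrime p) (LocalizedModule p.primeCompl M) =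
        (t : WithBot (WithTop ℕ)) ∧
      Module.IsCM (Localization.AtPrime p) (LocalizedModule p.primeCompl M) := by
  obtain ⟨rs, rfl, reg⟩ := h.2.1
  have hpI := associatedPrimes_quotient_subset_of_linkedBy h (IsNoetherian.noetherian b) hp
  exact ht ▸ localization_cm_of_linked_general reg
    (mem_minimalPrimes_annihilator_of_minimal hpI (hmin p hpI))
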